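/- An element u of V = Ǔ^{≥0}_{r,s}(sl_3) is invertible (a unit) if and only if u = λ K_1^m K_2^n for some λ ∈ ℂ^* and m, n ∈ ℤ. -/

import Mathlib

/-!
The algebra `V` embeds in a quantum torus `T` on variables `x₁, x₂, x₃, K₁, K₂` by
`E₁ ↦ x₁ + x₃`, `E₂ ↦ x₂`, `Kᵢ ↦ Kᵢ`, where `x₁x₂ = r x₂x₁`, `x₃x₂ = s x₂x₃`,
`x₃x₁ = r s⁻¹ x₁x₃`, and `x₁, x₃` carry the `K`-weights of `E₁`, `x₂` those of `E₂`. Under this map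
`E₃ = E₁E₂ - s E₂E₁` goes to `(r - s) x₂x₁`. Here `T` is represented by its underlying vector space
`QG →₀ ℂ`, on which `V` acts by operators commuting with right multiplications (`qphi`,
`qphi_comm_qR`); applying an operator to the unit vector gives the corresponding element of `T`
(`qev`).

Injectivity is a PBW argument. The Serre relations say `E₁E₃ = r E₃E₁` and `E₃E₂ = r E₂E₃`, so the
monomials `E₂^a E₃^b E₁^c K₁^m K₂^n` span `V` (`qmon_span`). Their images have distinct leading
exponents `x₁^b x₂^(a+b) x₃^c K₁^m K₂^n` for the degree in `x₃`, with nonzero coefficients because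
`r ≠ s`, so they are independent (`qev_linearIndependent`).

The exponent group `ℤ⁵` has the two-unique-sums property, so a unit of `V` and its inverse both map
to monomials (`qev_unit`). Both images have non-negative exponents in the `xᵢ` (`qev_nonneg`) and
these exponents add up to zero, so they vanish. The unit thus has the same image as some
`λ K₁^m K₂^n`, and injectivity concludes.
-/

noncomputable section

open FreeAlgebra

/-- The defining relations of the augmented Hopf algebra `Ǔ^{≥0}_{r,s}(sl₃)` (with
`r = ρ³`, `s = σ³`) as a quotient of the free algebra on six generators:
generator `0` is `E₁`, `1` is `E₂`, `2` is `K₁`, `3` is `K₁⁻¹`, `4` is `K₂`, `5` is `K₂⁻¹`. -/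
inductive VRel (ρ σ : ℂ) : FreeAlgebra ℂ (Fin 6) → FreeAlgebra ℂ (Fin 6) → Prop
  | k1inv : VRel ρ σ (ι ℂ (2 : Fin 6) * ι ℂ 3) 1
  | invk1 : VRel ρ σ (ι ℂ (3 : Fin 6) * ι ℂ 2) 1
  | k2inv : VRel ρ σ (ι ℂ (4 : Fin 6) * ι ℂ 5) 1
  | invk2 : VRel ρ σ (ι ℂ (5 : Fin 6) * ι ℂ 4) 1
  | k1k2 : VRel ρ σ (ι ℂ (2 : Fin 6) * ι ℂ 4) (ι ℂ (4 : Fin 6) * ι ℂ 2)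
  | k1e1 : VRel ρ σ (ι ℂ (2 : Fin 6) * ι ℂ 0) ((ρ * (σ ^ 2)⁻¹) • (ι ℂ (0 : Fin 6) * ι ℂ 2))
  | k1e2 : VRel ρ σ (ι ℂ (2 : Fin 6) * ι ℂ 1) ((ρ * σ) • (ι ℂ (1 : Fin 6) * ι ℂ 2))
  | k2e1 : VRel ρ σ (ι ℂ (4 : Fin 6) * ι ℂ 0) ((ρ⁻¹ * σ⁻¹) • (ι ℂ (0 : Fin 6) * ι ℂ 4))
  | k2e2 : VRel ρ σ (ι ℂ (4 : Fin 6) * ι ℂ 1) ((ρ ^ 2 * σ⁻¹) • (ι ℂ (1 : Fin 6) * ι ℂ 4))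
  | serre1 : VRel ρ σ
      (ι ℂ (0 : Fin 6) * ι ℂ 0 * ι ℂ 1 - (ρ ^ 3 + σ ^ 3) • (ι ℂ (0 : Fin 6) * ι ℂ 1 * ι ℂ 0)
        + (ρ ^ 3 * σ ^ 3) • (ι ℂ (1 : Fin 6) * ι ℂ 0 * ι ℂ 0)) 0
  | serre2 : VRel ρ σ
      (ι ℂ (0 : Fin 6) * ι ℂ 1 * ι ℂ 1 - (ρ ^ 3 + σ ^ 3) • (ι ℂ (1 : Fin 6) * ι ℂ 0 * ι ℂ 1)
        + (ρ ^ 3 * σ ^ 3) • (ι ℂ (1 : Fin 6) * ι ℂ 1 * ι ℂ 0)) 0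

/-- The augmented Hopf algebra `Ǔ^{≥0}_{r,s}(sl₃)`. -/
abbrev Vsl3 (ρ σ : ℂ) := RingQuot (VRel ρ σ)

def vE₁ (ρ σ : ℂ) : Vsl3 ρ σ := RingQuot.mkAlgHom ℂ (VRel ρ σ) (ι ℂ 0)
def vE₂ (ρ σ : ℂ) : Vsl3 ρ σ := RingQuot.mkAlgHom ℂ (VRel ρ σ) (ι ℂ 1)
def K₁ (ρ σ : ℂ) : Vsl3 ρ σ := RingQuot.mkAlgHom ℂ (VRel ρ σ) (ι ℂ 2)
def K₁inv (ρ σ : ℂ) : Vsl3 ρ σ := RingQuot.mkAlgHom ℂ (VRel ρ σ) (ι ℂ 3)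
def K₂ (ρ σ : ℂ) : Vsl3 ρ σ := RingQuot.mkAlgHom ℂ (VRel ρ σ) (ι ℂ 4)
def K₂inv (ρ σ : ℂ) : Vsl3 ρ σ := RingQuot.mkAlgHom ℂ (VRel ρ σ) (ι ℂ 5)
def vE₃ (ρ σ : ℂ) : Vsl3 ρ σ := vE₁ ρ σ * vE₂ ρ σ - σ ^ 3 • (vE₂ ρ σ * vE₁ ρ σ)

/-- Integer powers of `K₁`: for negative `m`, `K₁^m` means `(K₁⁻¹)^(-m)`. -/
def K₁z (ρ σ : ℂ) (m : ℤ) : Vsl3 ρ σ :=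
  if 0 ≤ m then K₁ ρ σ ^ m.toNat else K₁inv ρ σ ^ (-m).toNat

/-- Integer powers of `K₂`: for negative `n`, `K₂^n` means `(K₂⁻¹)^(-n)`. -/
def K₂z (ρ σ : ℂ) (n : ℤ) : Vsl3 ρ σ :=
  if 0 ≤ n then K₂ ρ σ ^ n.toNat else K₂inv ρ σ ^ (-n).toNat


/-! ### The quantum torus and its regular representation -/

/-- Exponent lattice of the quantum torus: `(x₁, x₂, x₃, K₁, K₂)`. -/
abbrev QG := ℤ × ℤ × ℤ × ℤ × ℤ

/-- Exponent of `ρ` in the bicharacter `qchi`. -/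
def qA (g h : QG) : ℤ :=
  3 * g.1 * h.2.1 + 3 * g.2.2.1 * h.1 + g.2.2.2.1 * (h.1 + h.2.1 + h.2.2.1)
    + g.2.2.2.2 * (2 * h.2.1 - h.1 - h.2.2.1)

/-- Exponent of `σ` in the bicharacter `qchi`. -/
def qB (g h : QG) : ℤ :=
  3 * g.2.2.1 * h.2.1 - 3 * g.2.2.1 * h.1 + g.2.2.2.1 * (h.2.1 - 2 * h.1 - 2 * h.2.2.1)
    - g.2.2.2.2 * (h.1 + h.2.1 + h.2.2.1)

/-- The bicharacter `ρ ^ qA * σ ^ qB` of the lattice `QG` that twists the multiplication of the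
quantum torus: `x^g * x^h = qchi g h • x^(g + h)`. -/
def qchi (ρ σ : ℂ) (g h : QG) : ℂ := ρ ^ qA g h * σ ^ qB g h

lemma qchi_ne {ρ σ : ℂ} (hρ : ρ ≠ 0) (hσ : σ ≠ 0) (g h : QG) : qchi ρ σ g h ≠ 0 :=
  mul_ne_zero (zpow_ne_zero _ hρ) (zpow_ne_zero _ hσ)

lemma qchi_add_left {ρ σ : ℂ} (hρ : ρ ≠ 0) (hσ : σ ≠ 0) (g g' h : QG) :
    qchi ρ σ (g + g') h = qchi ρ σ g h * qchi ρ σ g' h := by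
  have hA : qA (g + g') h = qA g h + qA g' h := by simp [qA]; ring
  have hB : qB (g + g') h = qB g h + qB g' h := by simp [qB]; ring
  simp only [qchi, hA, hB, zpow_add₀ hρ, zpow_add₀ hσ]; ring

lemma qchi_add_right {ρ σ : ℂ} (hρ : ρ ≠ 0) (hσ : σ ≠ 0) (g h h' : QG) :
    qchi ρ σ g (h + h') = qchi ρ σ g h * qchi ρ σ g h' := by
  have hA : qA g (h + h') = qA g h + qA g h' := by simp [qA]; ring
  have hB : qB g (h + h') = qB g h + qB g h' := by simp [qB]; ring
  simp only [qchi, hA, hB, zpow_add₀ hρ, zpow_add₀ hσ]; ring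

/-- The operator of left multiplication by the monomial `x^g` on the quantum torus. -/
def qL (ρ σ : ℂ) (g : QG) : Module.End ℂ (QG →₀ ℂ) :=
  Finsupp.lsum ℂ fun h => qchi ρ σ g h • Finsupp.lsingle (g + h)

/-- The operator of right multiplication by the monomial `x^h` on the quantum torus. -/
def qR (ρ σ : ℂ) (h : QG) : Module.End ℂ (QG →₀ ℂ) :=
  Finsupp.lsum ℂ fun g => qchi ρ σ g h • Finsupp.lsingle (g + h)

lemma qL_single (ρ σ : ℂ) (g h : QG) (c : ℂ) :
    qL ρ σ g (Finsupp.single h c) = Finsupp.single (g + h) (qchi ρ σ g h * c) := by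
  simp [qL]

lemma qR_single (ρ σ : ℂ) (g h : QG) (c : ℂ) :
    qR ρ σ h (Finsupp.single g c) = Finsupp.single (g + h) (qchi ρ σ g h * c) := by
  simp [qR]

lemma qL_apply (ρ σ : ℂ) (g h : QG) (f : QG →₀ ℂ) :
    qL ρ σ g f h = qchi ρ σ g (h - g) * f (h - g) := by
  induction f using Finsupp.induction_linear with
  | zero => simp
  | add f f' hf hf' => simp [hf, hf', mul_add]
  | single k c =>
    rw [qL_single]
    by_cases hk : g + k = h
    · subst hk; simp
    · have : k ≠ h - g := fun e => hk (by rw [e]; abel)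
      simp [hk, this]

lemma qL_mul {ρ σ : ℂ} (hρ : ρ ≠ 0) (hσ : σ ≠ 0) (g h : QG) :
    qL ρ σ g * qL ρ σ h = qchi ρ σ g h • qL ρ σ (g + h) := by
  refine Finsupp.lhom_ext fun k c => ?_
  simp only [Module.End.mul_apply, qL_single, LinearMap.smul_apply, Finsupp.smul_single,
    smul_eq_mul, qchi_add_left hρ hσ, qchi_add_right hρ hσ, add_assoc]
  congr 1; ring

lemma qL_zero (ρ σ : ℂ) : qL ρ σ 0 = 1 := by
  refine Finsupp.lhom_ext fun k c => ?_
  simp [qL_single, qchi, qA, qB]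

lemma qL_comm_qR {ρ σ : ℂ} (hρ : ρ ≠ 0) (hσ : σ ≠ 0) (g h : QG) :
    Commute (qL ρ σ g) (qR ρ σ h) := by
  refine Finsupp.lhom_ext fun k c => ?_
  simp only [Module.End.mul_apply, qL_single, qR_single, qchi_add_left hρ hσ,
    qchi_add_right hρ hσ, add_assoc]
  congr 1; ring

/-- Images of the six generators: `E₁ ↦ x₁ + x₃`, `E₂ ↦ x₂`, `Kᵢ ↦ Kᵢ`. -/
def qGen (ρ σ : ℂ) : Fin 6 → Module.End ℂ (QG →₀ ℂ) :=
  ![qL ρ σ (1, 0, 0, 0, 0) + qL ρ σ (0, 0, 1, 0, 0), qL ρ σ (0, 1, 0, 0, 0),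
    qL ρ σ (0, 0, 0, 1, 0), qL ρ σ (0, 0, 0, -1, 0),
    qL ρ σ (0, 0, 0, 0, 1), qL ρ σ (0, 0, 0, 0, -1)]

lemma qGen_rel {ρ σ : ℂ} (hρ : ρ ≠ 0) (hσ : σ ≠ 0) ⦃a b : FreeAlgebra ℂ (Fin 6)⦄
    (h : VRel ρ σ a b) :
    FreeAlgebra.lift ℂ (qGen ρ σ) a = FreeAlgebra.lift ℂ (qGen ρ σ) b := by
  have h0 : qL ρ σ (0, 0, 0, 0, 0) = 1 := qL_zero ρ σ
  cases h <;>
  simp [qGen, mul_add, add_mul, qL_mul hρ hσ, smul_add, smul_smul, qchi, qA, qB, h0,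
    zpow_neg] <;>
  norm_cast
  all_goals match_scalars <;> field_simp <;> ring

/-- The Feigin-type homomorphism from `Ǔ^{≥0}_{r,s}(sl₃)` to operators on the quantum torus. -/
def qphi {ρ σ : ℂ} (hρ : ρ ≠ 0) (hσ : σ ≠ 0) : Vsl3 ρ σ →ₐ[ℂ] Module.End ℂ (QG →₀ ℂ) :=
  RingQuot.liftAlgHom ℂ ⟨FreeAlgebra.lift ℂ (qGen ρ σ), qGen_rel hρ hσ⟩

section Rep

variable {ρ σ : ℂ} (hρ : ρ ≠ 0) (hσ : σ ≠ 0)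

lemma qphi_mk (a : FreeAlgebra ℂ (Fin 6)) :
    qphi hρ hσ (RingQuot.mkAlgHom ℂ (VRel ρ σ) a) = FreeAlgebra.lift ℂ (qGen ρ σ) a := by
  simp [qphi]

lemma qphi_E₁ : qphi hρ hσ (vE₁ ρ σ) = qL ρ σ (1, 0, 0, 0, 0) + qL ρ σ (0, 0, 1, 0, 0) := by
  simp [vE₁, qphi_mk, qGen]

lemma qphi_E₂ : qphi hρ hσ (vE₂ ρ σ) = qL ρ σ (0, 1, 0, 0, 0) := by
  simp [vE₂, qphi_mk, qGen]

lemma qphi_E₃ : qphi hρ hσ (vE₃ ρ σ) = (ρ ^ 3 - σ ^ 3) • qL ρ σ (1, 1, 0, 0, 0) := by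
  simp [vE₃, qphi_E₁, qphi_E₂, mul_add, add_mul, qL_mul hρ hσ, qchi, qA, qB]
  norm_cast
  match_scalars <;> ring

lemma qphi_K₁ : qphi hρ hσ (K₁ ρ σ) = qL ρ σ (0, 0, 0, 1, 0) := by
  simp [K₁, qphi_mk, qGen]

lemma qphi_K₁inv : qphi hρ hσ (K₁inv ρ σ) = qL ρ σ (0, 0, 0, -1, 0) := by
  simp [K₁inv, qphi_mk, qGen]

lemma qphi_K₂ : qphi hρ hσ (K₂ ρ σ) = qL ρ σ (0, 0, 0, 0, 1) := by
  simp [K₂, qphi_mk, qGen]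

lemma qphi_K₂inv : qphi hρ hσ (K₂inv ρ σ) = qL ρ σ (0, 0, 0, 0, -1) := by
  simp [K₂inv, qphi_mk, qGen]

lemma qphi_K₁z (m : ℤ) : qphi hρ hσ (K₁z ρ σ m) = qL ρ σ (0, 0, 0, m, 0) := by
  have key : ∀ (a : ℤ) (k : ℕ), qL ρ σ (0, 0, 0, a, 0) ^ k = qL ρ σ (0, 0, 0, k * a, 0) := by
    intro a k
    induction k with
    | zero => rw [pow_zero, ← qL_zero ρ σ]; simp; rfl
    | succ k ih => rw [pow_succ, ih, qL_mul hρ hσ]; simp [qchi, qA, qB, add_mul]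
  unfold K₁z
  split_ifs with h
  · rw [map_pow, qphi_K₁, key]; congr 4; simp; omega
  · rw [map_pow, qphi_K₁inv, key]; congr 4; simp; omega

lemma qphi_K₂z (m : ℤ) : qphi hρ hσ (K₂z ρ σ m) = qL ρ σ (0, 0, 0, 0, m) := by
  have key : ∀ (a : ℤ) (k : ℕ), qL ρ σ (0, 0, 0, 0, a) ^ k = qL ρ σ (0, 0, 0, 0, k * a) := by
    intro a k
    induction k with
    | zero => rw [pow_zero, ← qL_zero ρ σ]; simp; rfl
    | succ k ih => rw [pow_succ, ih, qL_mul hρ hσ]; simp [qchi, qA, qB, add_mul]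
  unfold K₂z
  split_ifs with h
  · rw [map_pow, qphi_K₂, key]; congr 4; simp; omega
  · rw [map_pow, qphi_K₂inv, key]; congr 4; simp; omega

/-- Operators in the image commute with right multiplications, so they are left multiplications
by elements of the quantum torus. -/
lemma qphi_comm_qR (h : QG) (v : Vsl3 ρ σ) : Commute (qphi hρ hσ v) (qR ρ σ h) := by
  obtain ⟨a, rfl⟩ := RingQuot.mkAlgHom_surjective ℂ (VRel ρ σ) v
  rw [qphi_mk]
  induction a using FreeAlgebra.induction with
  | grade0 c => rw [AlgHom.commutes]; exact Algebra.commutes c _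
  | grade1 i =>
    rw [FreeAlgebra.lift_ι_apply]
    fin_cases i <;> simp [qGen, qL_comm_qR hρ hσ, Commute.add_left]
  | mul a b ha hb => rw [map_mul]; exact ha.mul_left hb
  | add a b ha hb => rw [map_add]; exact ha.add_left hb

/-- The element of the quantum torus corresponding to `v`, obtained by applying the operator
`qphi v` to the unit vector. -/
def qev : Vsl3 ρ σ →ₗ[ℂ] (QG →₀ ℂ) :=
  (LinearMap.applyₗ (Finsupp.single (0 : QG) (1 : ℂ))) ∘ₗ (qphi hρ hσ).toLinearMap

lemma qev_apply (v : Vsl3 ρ σ) : qev hρ hσ v = qphi hρ hσ v (Finsupp.single 0 1) := rfl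

/-- `qev` is multiplicative for the twisted product of the quantum torus. -/
lemma qev_mul (v w : Vsl3 ρ σ) :
    qev hρ hσ (v * w) = (qev hρ hσ w).sum fun h c => (qev hρ hσ v).sum fun g d =>
      Finsupp.single (g + h) (qchi ρ σ g h * (c * d)) := by
  have h1 : ∀ h : QG, ∀ c : ℂ, qphi hρ hσ v (Finsupp.single h c)
      = c • qR ρ σ h (qev hρ hσ v) := by
    intro h c
    have := LinearMap.congr_fun (qphi_comm_qR hρ hσ h v) (Finsupp.single 0 1)
    simp only [Module.End.mul_apply, qR_single] at this
    rw [qev_apply, ← this, ← map_smul]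
    simp [qchi, qA, qB]
  rw [qev_apply, map_mul, Module.End.mul_apply, ← qev_apply]
  conv_lhs => rw [← Finsupp.sum_single (qev hρ hσ w)]
  rw [map_finsuppSum]
  refine Finsupp.sum_congr fun h _ => ?_
  rw [h1]
  conv_lhs => rw [← Finsupp.sum_single (qev hρ hσ v)]
  rw [map_finsuppSum, Finsupp.smul_sum]
  refine Finsupp.sum_congr fun g _ => ?_
  rw [qR_single, Finsupp.smul_single, smul_eq_mul]
  congr 1; ring

/-- A sum of exponents attained by only one pair in the supports survives in the product. -/
lemma qev_mul_apply_of_unique (v w : Vsl3 ρ σ) (a b : QG)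
    (ha : a ∈ (qev hρ hσ v).support) (hb : b ∈ (qev hρ hσ w).support)
    (hu : UniqueAdd (qev hρ hσ v).support (qev hρ hσ w).support a b) :
    qev hρ hσ (v * w) (a + b) ≠ 0 := by
  rw [qev_mul, Finsupp.sum_apply, Finsupp.sum, Finset.sum_eq_single b, Finsupp.sum_apply,
    Finsupp.sum, Finset.sum_eq_single a, Finsupp.single_eq_same]
  · exact mul_ne_zero (qchi_ne hρ hσ _ _)
      (mul_ne_zero (Finsupp.mem_support_iff.1 hb) (Finsupp.mem_support_iff.1 ha))
  · intro g hg hga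
    exact Finsupp.single_eq_of_ne fun e => hga (hu hg hb e.symm).1
  · exact fun h => absurd ha h
  · intro h hh hhb
    rw [Finsupp.sum_apply, Finsupp.sum]
    refine Finset.sum_eq_zero fun g hg => ?_
    exact Finsupp.single_eq_of_ne fun e => hhb (hu hg hh e.symm).2
  · exact fun h => absurd hb h

/-- If `v * w = 1`, then `v` and `w` map to inverse monomials of the quantum torus: if there were
more than one pair of exponents in the two supports, two different pairs would have sums surviving
in `v * w = 1`, hence both sums zero, against uniqueness. -/
lemma qev_unit (v w : Vsl3 ρ σ) (hvw : v * w = 1) :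
    ∃ a : QG, (qev hρ hσ v).support = {a} ∧ (qev hρ hσ w).support = {-a} := by
  classical
  have h1 : qev hρ hσ (v * w) = Finsupp.single 0 1 := by rw [hvw, qev_apply, map_one]; rfl
  have hz : ∀ a b : QG, a ∈ (qev hρ hσ v).support → b ∈ (qev hρ hσ w).support →
      UniqueAdd (qev hρ hσ v).support (qev hρ hσ w).support a b → a + b = 0 := by
    intro a b ha hb hu
    by_contra hne
    exact qev_mul_apply_of_unique hρ hσ v w a b ha hb hu
      (by rw [h1]; exact Finsupp.single_eq_of_ne hne)
  have hv : (qev hρ hσ v).support.Nonempty := by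
    rw [Finset.nonempty_iff_ne_empty, Ne, Finsupp.support_eq_empty]
    intro h; rw [qev_mul, h] at h1; simpa using DFunLike.congr_fun h1 0
  have hw : (qev hρ hσ w).support.Nonempty := by
    rw [Finset.nonempty_iff_ne_empty, Ne, Finsupp.support_eq_empty]
    intro h; rw [qev_mul, h] at h1; simpa using DFunLike.congr_fun h1 0
  have hcard : ¬ 1 < (qev hρ hσ v).support.card * (qev hρ hσ w).support.card := by
    intro hc
    obtain ⟨p, hp, p', hp', hne, hu, hu'⟩ := TwoUniqueSums.uniqueAdd_of_one_lt_card hc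
    rw [Finset.mem_product] at hp hp'
    have e := hz _ _ hp.1 hp.2 hu
    have e' := hz _ _ hp'.1 hp'.2 hu'
    have := hu hp'.1 hp'.2 (e'.trans e.symm)
    exact hne (Prod.ext this.1.symm this.2.symm)
  have c1 := hv.card_pos
  have c2 := hw.card_pos
  have d1 : (qev hρ hσ v).support.card = 1 := by nlinarith
  have d2 : (qev hρ hσ w).support.card = 1 := by nlinarith
  obtain ⟨a, ha⟩ := Finset.card_eq_one.1 d1
  obtain ⟨b, hb⟩ := Finset.card_eq_one.1 d2
  have := hz a b (by simp [ha]) (by simp [hb]) (by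
    intro x y hx hy _
    rw [ha, Finset.mem_singleton] at hx
    rw [hb, Finset.mem_singleton] at hy
    exact ⟨hx, hy⟩)
  exact ⟨a, ha, by rw [hb, eq_neg_of_add_eq_zero_right this]⟩

/-! ### Independence of the PBW monomials -/

/-- The ordered monomial `E₂^a E₃^b E₁^c K₁^m K₂^n`, indexed by `(a, b, c, m, n)`. -/
def qmon (ρ σ : ℂ) (i : ℕ × ℕ × ℕ × ℤ × ℤ) : Vsl3 ρ σ :=
  vE₂ ρ σ ^ i.1 * (vE₃ ρ σ ^ i.2.1 * (vE₁ ρ σ ^ i.2.2.1 * (K₁z ρ σ i.2.2.2.1 * K₂z ρ σ i.2.2.2.2)))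

lemma qev_K (m n : ℤ) :
    qev hρ hσ (K₁z ρ σ m * K₂z ρ σ n) = Finsupp.single (0, 0, 0, m, n) 1 := by
  rw [qev_apply, map_mul, qphi_K₁z, qphi_K₂z, qL_mul hρ hσ, LinearMap.smul_apply, qL_single]
  simp [qchi, qA, qB]

/-- Exponents occurring in `(x₁ + x₃)^c` times a monomial. -/
lemma qE₁_pow_support (c : ℕ) (k g : QG)
    (h : (qphi hρ hσ (vE₁ ρ σ) ^ c) (Finsupp.single k 1) g ≠ 0) :
    ∃ i : ℕ, i ≤ c ∧ g = k + ((i : ℤ), 0, (c : ℤ) - i, 0, 0) := by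
  induction c generalizing g with
  | zero =>
    refine ⟨0, le_rfl, ?_⟩
    by_contra hne
    refine h ?_
    rw [pow_zero, Module.End.one_apply]
    refine Finsupp.single_eq_of_ne fun e => hne ?_
    rw [e]; ext <;> simp
  | succ c ih =>
    rw [pow_succ', Module.End.mul_apply, qphi_E₁, LinearMap.add_apply, Finsupp.add_apply,
      qL_apply, qL_apply, ← qphi_E₁ hρ hσ] at h
    by_cases h1 : (qphi hρ hσ (vE₁ ρ σ) ^ c) (Finsupp.single k 1) (g - (1, 0, 0, 0, 0)) = 0
    · rw [h1, mul_zero, zero_add] at h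
      obtain ⟨i, hi, e⟩ := ih _ (right_ne_zero_of_mul h)
      refine ⟨i, by omega, ?_⟩
      rw [sub_eq_iff_eq_add.1 e]
      ext <;> simp; ring
    · obtain ⟨i, hi, e⟩ := ih _ h1
      refine ⟨i + 1, by omega, ?_⟩
      rw [sub_eq_iff_eq_add.1 e]
      ext <;> simp; ring

lemma qE₁_pow_lead (c : ℕ) (k : QG) :
    (qphi hρ hσ (vE₁ ρ σ) ^ c) (Finsupp.single k 1) (k + (0, 0, (c : ℤ), 0, 0)) ≠ 0 := by
  induction c with
  | zero =>
    have : k + (0, 0, ((0 : ℕ) : ℤ), 0, 0) = k := by ext <;> simp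
    rw [this]; simp
  | succ c ih =>
    have h1 : (qphi hρ hσ (vE₁ ρ σ) ^ c) (Finsupp.single k 1)
        (k + (0, 0, ((c + 1 : ℕ) : ℤ), 0, 0) - (1, 0, 0, 0, 0)) = 0 := by
      by_contra h
      obtain ⟨i, hi, e⟩ := qE₁_pow_support hρ hσ c _ _ h
      have := congrArg Prod.fst e
      simp at this
      omega
    have h2 : k + (0, 0, ((c + 1 : ℕ) : ℤ), 0, 0) - (0, 0, 1, 0, 0)
        = k + (0, 0, (c : ℤ), 0, 0) := by ext <;> simp; ring
    rw [pow_succ', Module.End.mul_apply, qphi_E₁, LinearMap.add_apply, Finsupp.add_apply,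
      qL_apply, qL_apply, ← qphi_E₁ hρ hσ, h1, h2, mul_zero, zero_add]
    exact mul_ne_zero (qchi_ne hρ hσ _ _) ih

/-- Powers of a left multiplication operator shift exponents, up to a nonzero factor depending on
the position. -/
lemma qL_pow_apply {ρ σ : ℂ} (hρ : ρ ≠ 0) (hσ : σ ≠ 0) (g : QG) (k : ℕ) :
    ∀ h : QG, ∃ d : ℂ, d ≠ 0 ∧ ∀ f : QG →₀ ℂ, (qL ρ σ g ^ k) f h = d * f (h - k • g) := by
  induction k with
  | zero => exact fun h => ⟨1, one_ne_zero, fun f => by simp⟩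
  | succ k ih =>
    intro h
    obtain ⟨d, hd, e⟩ := ih (h - g)
    refine ⟨qchi ρ σ g (h - g) * d, mul_ne_zero (qchi_ne hρ hσ _ _) hd, fun f => ?_⟩
    rw [pow_succ', Module.End.mul_apply, qL_apply, e, mul_assoc]
    congr 3
    rw [succ_nsmul]; abel

lemma qev_qmon (hrs : ρ ^ 3 - σ ^ 3 ≠ 0) (a b c : ℕ) (m n : ℤ) (h : QG) :
    ∃ d : ℂ, d ≠ 0 ∧ qev hρ hσ (qmon ρ σ (a, b, c, m, n)) h =
      d * (qphi hρ hσ (vE₁ ρ σ) ^ c) (Finsupp.single (0, 0, 0, m, n) 1)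
        (h - ((b : ℤ), (a : ℤ) + b, 0, 0, 0)) := by
  obtain ⟨d, hd, e⟩ := qL_pow_apply hρ hσ (0, 1, 0, 0, 0) a h
  obtain ⟨d', hd', e'⟩ := qL_pow_apply hρ hσ (1, 1, 0, 0, 0) b (h - a • (0, 1, 0, 0, 0))
  refine ⟨d * ((ρ ^ 3 - σ ^ 3) ^ b * d'),
    mul_ne_zero hd (mul_ne_zero (pow_ne_zero _ hrs) hd'), ?_⟩
  have hK : qphi hρ hσ (K₁z ρ σ m * K₂z ρ σ n) (Finsupp.single 0 1)
      = Finsupp.single (0, 0, 0, m, n) 1 := qev_K hρ hσ m n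
  have hi : h - a • ((0, 1, 0, 0, 0) : QG) - b • ((1, 1, 0, 0, 0) : QG)
      = h - ((b : ℤ), (a : ℤ) + b, 0, 0, 0) := by ext <;> simp; ring
  rw [qev_apply, qmon, map_mul, map_mul, map_mul, map_pow, map_pow, map_pow, Module.End.mul_apply,
    Module.End.mul_apply, Module.End.mul_apply, hK, qphi_E₂, e, qphi_E₃, smul_pow,
    LinearMap.smul_apply, Finsupp.smul_apply, e', hi, smul_eq_mul]
  ring

/-- Support of the image of an ordered monomial. -/
lemma qev_qmon_support (hrs : ρ ^ 3 - σ ^ 3 ≠ 0) (a b c : ℕ) (m n : ℤ) (h : QG)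
    (hne : qev hρ hσ (qmon ρ σ (a, b, c, m, n)) h ≠ 0) :
    ∃ i : ℕ, i ≤ c ∧ h = ((b : ℤ) + i, (a : ℤ) + b, (c : ℤ) - i, m, n) := by
  obtain ⟨d, hd, e⟩ := qev_qmon hρ hσ hrs a b c m n h
  rw [e] at hne
  obtain ⟨i, hi, e2⟩ := qE₁_pow_support hρ hσ c _ _ (right_ne_zero_of_mul hne)
  refine ⟨i, hi, ?_⟩
  rw [sub_eq_iff_eq_add.1 e2]
  ext <;> simp; ring

lemma qev_qmon_lead (hrs : ρ ^ 3 - σ ^ 3 ≠ 0) (a b c : ℕ) (m n : ℤ) :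
    qev hρ hσ (qmon ρ σ (a, b, c, m, n)) ((b : ℤ), (a : ℤ) + b, (c : ℤ), m, n) ≠ 0 := by
  obtain ⟨d, hd, e⟩ := qev_qmon hρ hσ hrs a b c m n ((b : ℤ), (a : ℤ) + b, (c : ℤ), m, n)
  rw [e]
  refine mul_ne_zero hd ?_
  have := qE₁_pow_lead hρ hσ c (0, 0, 0, m, n)
  convert this using 2
  ext <;> simp

/-- Independence of the images of the ordered monomials. Among the monomials occurring, one with
the largest exponent `c` of `E₁` has its leading term `x₃^c ⋯` cancelled by nothing else. -/
lemma qev_linearIndependent (hrs : ρ ^ 3 - σ ^ 3 ≠ 0) (l : (ℕ × ℕ × ℕ × ℤ × ℤ) →₀ ℂ)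
    (hl : (l.sum fun i c => c • qev hρ hσ (qmon ρ σ i)) = 0) : l = 0 := by
  by_contra hne
  obtain ⟨⟨a, b, c, m, n⟩, hi, hmax⟩ :=
    l.support.exists_max_image (fun i => i.2.2.1) (Finsupp.support_nonempty_iff.2 hne)
  have h := DFunLike.congr_fun hl ((b : ℤ), (a : ℤ) + b, (c : ℤ), m, n)
  rw [Finsupp.sum_apply, Finsupp.sum, Finset.sum_eq_single (a, b, c, m, n)] at h
  · rw [Finsupp.smul_apply, smul_eq_mul, Finsupp.zero_apply] at h
    exact mul_ne_zero (Finsupp.mem_support_iff.1 hi) (qev_qmon_lead hρ hσ hrs a b c m n) h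
  · rintro ⟨a', b', c', m', n'⟩ hj hji
    have hc := hmax _ hj
    rw [Finsupp.smul_apply, smul_eq_mul]
    by_contra h0
    obtain ⟨i, hi', e⟩ := qev_qmon_support hρ hσ hrs _ _ _ _ _ _ (right_ne_zero_of_mul h0)
    simp only [Prod.mk.injEq] at e hc
    obtain ⟨e1, e2, e3, e4, e5⟩ := e
    refine hji ?_
    simp only [Prod.mk.injEq]
    exact ⟨by omega, by omega, by omega, e4.symm, e5.symm⟩
  · exact fun h => absurd hi h

end Rep

/-! ### Spanning by the PBW monomials -/

section Span

variable (ρ σ : ℂ)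

lemma vrel_eq {a b : FreeAlgebra ℂ (Fin 6)} (h : VRel ρ σ a b) :
    RingQuot.mkAlgHom ℂ (VRel ρ σ) a = RingQuot.mkAlgHom ℂ (VRel ρ σ) b :=
  RingQuot.mkAlgHom_rel ℂ h

/-- `K₁` as a unit. -/
def uK₁ : (Vsl3 ρ σ)ˣ where
  val := K₁ ρ σ
  inv := K₁inv ρ σ
  val_inv := by simpa [K₁, K₁inv] using vrel_eq ρ σ VRel.k1inv
  inv_val := by simpa [K₁, K₁inv] using vrel_eq ρ σ VRel.invk1

/-- `K₂` as a unit. -/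
def uK₂ : (Vsl3 ρ σ)ˣ where
  val := K₂ ρ σ
  inv := K₂inv ρ σ
  val_inv := by simpa [K₂, K₂inv] using vrel_eq ρ σ VRel.k2inv
  inv_val := by simpa [K₂, K₂inv] using vrel_eq ρ σ VRel.invk2

lemma K₁z_eq (m : ℤ) : K₁z ρ σ m = ((uK₁ ρ σ ^ m : (Vsl3 ρ σ)ˣ) : Vsl3 ρ σ) := by
  unfold K₁z
  split_ifs with h
  · lift m to ℕ using h
    simp [uK₁]
  · obtain ⟨k, rfl⟩ : ∃ k : ℕ, m = -k := ⟨(-m).toNat, by omega⟩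
    rw [zpow_neg, zpow_natCast, ← inv_pow, Units.val_pow_eq_pow_val]
    simp [uK₁]

lemma K₂z_eq (m : ℤ) : K₂z ρ σ m = ((uK₂ ρ σ ^ m : (Vsl3 ρ σ)ˣ) : Vsl3 ρ σ) := by
  unfold K₂z
  split_ifs with h
  · lift m to ℕ using h
    simp [uK₂]
  · obtain ⟨k, rfl⟩ : ∃ k : ℕ, m = -k := ⟨(-m).toNat, by omega⟩
    rw [zpow_neg, zpow_natCast, ← inv_pow, Units.val_pow_eq_pow_val]
    simp [uK₂]

lemma uK_comm : Commute (uK₁ ρ σ) (uK₂ ρ σ) := by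
  apply Units.ext
  simpa [uK₁, uK₂, K₁, K₂] using vrel_eq ρ σ VRel.k1k2

lemma K₁_E₁ : K₁ ρ σ * vE₁ ρ σ = (ρ * (σ ^ 2)⁻¹) • (vE₁ ρ σ * K₁ ρ σ) := by
  simpa [K₁, vE₁] using vrel_eq ρ σ VRel.k1e1

lemma K₁_E₂ : K₁ ρ σ * vE₂ ρ σ = (ρ * σ) • (vE₂ ρ σ * K₁ ρ σ) := by
  simpa [K₁, vE₂] using vrel_eq ρ σ VRel.k1e2

lemma K₂_E₁ : K₂ ρ σ * vE₁ ρ σ = (ρ⁻¹ * σ⁻¹) • (vE₁ ρ σ * K₂ ρ σ) := by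
  simpa [K₂, vE₁] using vrel_eq ρ σ VRel.k2e1

lemma K₂_E₂ : K₂ ρ σ * vE₂ ρ σ = (ρ ^ 2 * σ⁻¹) • (vE₂ ρ σ * K₂ ρ σ) := by
  simpa [K₂, vE₂] using vrel_eq ρ σ VRel.k2e2

lemma E₁_E₃ : SemiconjBy (vE₁ ρ σ) (vE₃ ρ σ) (ρ ^ 3 • vE₃ ρ σ) := by
  have h := vrel_eq ρ σ VRel.serre1
  simp only [map_add, map_sub, map_mul, map_smul, map_zero] at h
  rw [SemiconjBy, ← sub_eq_zero, ← h]
  simp only [vE₃, vE₁, vE₂, mul_sub, sub_mul, smul_sub, smul_mul_assoc, mul_smul_comm, mul_assoc,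
    smul_smul, add_smul]
  abel

lemma E₃_E₂ : SemiconjBy (vE₃ ρ σ) (vE₂ ρ σ) (ρ ^ 3 • vE₂ ρ σ) := by
  have h := vrel_eq ρ σ VRel.serre2
  simp only [map_add, map_sub, map_mul, map_smul, map_zero] at h
  rw [SemiconjBy, ← sub_eq_zero, ← h, mul_comm (ρ ^ 3) (σ ^ 3)]
  simp only [vE₃, vE₁, vE₂, mul_sub, sub_mul, smul_mul_assoc, mul_smul_comm, mul_assoc,
    smul_smul, add_smul]
  abel

lemma E₁_E₂_pow (a : ℕ) : ∃ c : ℂ, vE₁ ρ σ * vE₂ ρ σ ^ (a + 1) =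
    (σ ^ 3) ^ (a + 1) • (vE₂ ρ σ ^ (a + 1) * vE₁ ρ σ) + c • (vE₂ ρ σ ^ a * vE₃ ρ σ) := by
  have h12 : vE₁ ρ σ * vE₂ ρ σ = σ ^ 3 • (vE₂ ρ σ * vE₁ ρ σ) + vE₃ ρ σ := by simp [vE₃]
  induction a with
  | zero => exact ⟨1, by simpa using h12⟩
  | succ a ih =>
    obtain ⟨c, hc⟩ := ih
    refine ⟨(σ ^ 3) ^ (a + 1) + c * ρ ^ 3, ?_⟩
    rw [pow_succ (vE₂ ρ σ) (a + 1), ← mul_assoc, hc, add_mul, smul_mul_assoc, mul_assoc, h12,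
      smul_mul_assoc, mul_assoc (vE₂ ρ σ ^ a), (E₃_E₂ ρ σ).eq]
    simp only [mul_add, smul_add, mul_smul_comm, smul_mul_assoc, smul_smul, ← mul_assoc,
      ← pow_succ, add_smul]
    abel

/-- A unit that scales `E₁` and `E₂` under conjugation moves past `E₂^a E₃^b E₁^c` at the cost of
a scalar. -/
lemma unit_mul_qmon (k : (Vsl3 ρ σ)ˣ) (p q : ℂ)
    (h1 : SemiconjBy (k : Vsl3 ρ σ) (vE₁ ρ σ) (p • vE₁ ρ σ))
    (h2 : SemiconjBy (k : Vsl3 ρ σ) (vE₂ ρ σ) (q • vE₂ ρ σ)) (a b c : ℕ) (w : Vsl3 ρ σ) :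
    ∃ d : ℂ, (k : Vsl3 ρ σ) * (vE₂ ρ σ ^ a * (vE₃ ρ σ ^ b * (vE₁ ρ σ ^ c * w)))
      = d • (vE₂ ρ σ ^ a * (vE₃ ρ σ ^ b * (vE₁ ρ σ ^ c * (k * w)))) := by
  have h3 : SemiconjBy (k : Vsl3 ρ σ) (vE₃ ρ σ) ((p * q) • vE₃ ρ σ) := by
    have e : (p * q) • vE₃ ρ σ = (p • vE₁ ρ σ) * (q • vE₂ ρ σ)
        - σ ^ 3 • ((q • vE₂ ρ σ) * (p • vE₁ ρ σ)) := by
      simp only [vE₃, smul_sub, smul_mul_assoc, mul_smul_comm, smul_smul]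
      congr 2 <;> ring
    rw [e]
    have h12 := h1.mul_right h2
    have h21 := h2.mul_right h1
    rw [SemiconjBy, vE₃, mul_sub, sub_mul, mul_smul_comm, smul_mul_assoc (σ ^ 3), h12.eq, h21.eq]
  refine ⟨q ^ a * ((p * q) ^ b * p ^ c), ?_⟩
  have e1 := (h1.pow_right c).eq
  have e2 := (h2.pow_right a).eq
  have e3 := (h3.pow_right b).eq
  rw [smul_pow] at e1 e2 e3
  rw [← mul_assoc, e2, mul_assoc, ← mul_assoc (k : Vsl3 ρ σ), e3, mul_assoc,
    ← mul_assoc (k : Vsl3 ρ σ), e1, mul_assoc]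
  simp only [smul_mul_assoc, mul_smul_comm, smul_smul]
  congr 1; ring

lemma semiconj_inv (k : (Vsl3 ρ σ)ˣ) (e : Vsl3 ρ σ) (p : ℂ) (hp : p ≠ 0)
    (h : SemiconjBy (k : Vsl3 ρ σ) e (p • e)) :
    SemiconjBy ((k⁻¹ : (Vsl3 ρ σ)ˣ) : Vsl3 ρ σ) e (p⁻¹ • e) := by
  have h' := h.units_inv_symm_left.eq
  rw [mul_smul_comm] at h'
  rw [SemiconjBy, smul_mul_assoc, ← h', smul_smul, inv_mul_cancel₀ hp, one_smul]

lemma qmon_span_K (k : (Vsl3 ρ σ)ˣ) (p q : ℂ)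
    (h1 : SemiconjBy (k : Vsl3 ρ σ) (vE₁ ρ σ) (p • vE₁ ρ σ))
    (h2 : SemiconjBy (k : Vsl3 ρ σ) (vE₂ ρ σ) (q • vE₂ ρ σ))
    (hk : ∃ x y : ℤ, k = uK₁ ρ σ ^ x * uK₂ ρ σ ^ y) (i : ℕ × ℕ × ℕ × ℤ × ℤ) :
    (k : Vsl3 ρ σ) * qmon ρ σ i ∈ Submodule.span ℂ (Set.range (qmon ρ σ)) := by
  obtain ⟨a, b, c, m, n⟩ := i
  obtain ⟨x, y, hk⟩ := hk
  obtain ⟨d, hd⟩ := unit_mul_qmon ρ σ k p q h1 h2 a b c (K₁z ρ σ m * K₂z ρ σ n)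
  rw [qmon, hd]
  refine Submodule.smul_mem _ _ (Submodule.subset_span ⟨(a, b, c, x + m, y + n), ?_⟩)
  have e : K₁z ρ σ (x + m) * K₂z ρ σ (y + n) = k * (K₁z ρ σ m * K₂z ρ σ n) := by
    rw [K₁z_eq, K₂z_eq, K₁z_eq, K₂z_eq, ← Units.val_mul, ← Units.val_mul, ← Units.val_mul, hk]
    congr 1
    have := ((uK_comm ρ σ).zpow_zpow m y).eq
    rw [zpow_add, zpow_add, mul_assoc, ← mul_assoc (uK₁ ρ σ ^ m), this]
    simp only [mul_assoc]
  simp only [qmon, e]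

/-- Left multiplication by `E₁`, using `E₁ E₂^(a+1) = s^(a+1) E₂^(a+1) E₁ + c E₂^a E₃` and
`E₁ E₃ = r E₃ E₁`. -/
lemma qmon_span_E₁ (i : ℕ × ℕ × ℕ × ℤ × ℤ) :
    vE₁ ρ σ * qmon ρ σ i ∈ Submodule.span ℂ (Set.range (qmon ρ σ)) := by
  obtain ⟨a, b, c, m, n⟩ := i
  have e13 := ((E₁_E₃ ρ σ).pow_right b).eq
  rw [smul_pow] at e13
  -- the commutation of `E₁` past `E₃^b`, with the power of `E₂` kept on the left
  have key : ∀ a : ℕ, vE₂ ρ σ ^ a * (vE₁ ρ σ * (vE₃ ρ σ ^ b * (vE₁ ρ σ ^ c *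
      (K₁z ρ σ m * K₂z ρ σ n)))) ∈ Submodule.span ℂ (Set.range (qmon ρ σ)) := by
    intro a
    rw [← mul_assoc (vE₁ ρ σ) (vE₃ ρ σ ^ b), e13, smul_mul_assoc, smul_mul_assoc, mul_smul_comm]
    refine Submodule.smul_mem _ _ (Submodule.subset_span ⟨(a, b, c + 1, m, n), ?_⟩)
    simp only [qmon, pow_succ', mul_assoc]
  rw [qmon]
  cases a with
  | zero => simpa using key 0
  | succ a =>
    obtain ⟨d, hd⟩ := E₁_E₂_pow ρ σ a
    rw [← mul_assoc, hd, add_mul, smul_mul_assoc, smul_mul_assoc]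
    refine Submodule.add_mem _ (Submodule.smul_mem _ _ ?_) (Submodule.smul_mem _ _ ?_)
    · simpa only [mul_assoc] using key (a + 1)
    · refine Submodule.subset_span ⟨(a, b + 1, c, m, n), ?_⟩
      simp only [qmon, pow_succ', mul_assoc]

lemma qmon_span (hρ : ρ ≠ 0) (hσ : σ ≠ 0) (v : Vsl3 ρ σ) :
    v ∈ Submodule.span ℂ (Set.range (qmon ρ σ)) := by
  have a1 : SemiconjBy (uK₁ ρ σ : Vsl3 ρ σ) (vE₁ ρ σ) ((ρ * (σ ^ 2)⁻¹) • vE₁ ρ σ) := by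
    rw [SemiconjBy, smul_mul_assoc]; exact K₁_E₁ ρ σ
  have a2 : SemiconjBy (uK₁ ρ σ : Vsl3 ρ σ) (vE₂ ρ σ) ((ρ * σ) • vE₂ ρ σ) := by
    rw [SemiconjBy, smul_mul_assoc]; exact K₁_E₂ ρ σ
  have b1 : SemiconjBy (uK₂ ρ σ : Vsl3 ρ σ) (vE₁ ρ σ) ((ρ⁻¹ * σ⁻¹) • vE₁ ρ σ) := by
    rw [SemiconjBy, smul_mul_assoc]; exact K₂_E₁ ρ σ
  have b2 : SemiconjBy (uK₂ ρ σ : Vsl3 ρ σ) (vE₂ ρ σ) ((ρ ^ 2 * σ⁻¹) • vE₂ ρ σ) := by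
    rw [SemiconjBy, smul_mul_assoc]; exact K₂_E₂ ρ σ
  have gen : ∀ (j : Fin 6) (i : ℕ × ℕ × ℕ × ℤ × ℤ),
      RingQuot.mkAlgHom ℂ (VRel ρ σ) (ι ℂ j) * qmon ρ σ i
        ∈ Submodule.span ℂ (Set.range (qmon ρ σ)) := by
    intro j i
    fin_cases j
    · exact qmon_span_E₁ ρ σ i
    · refine Submodule.subset_span ⟨(i.1 + 1, i.2), ?_⟩
      change _ = vE₂ ρ σ * _
      simp only [qmon, pow_succ', mul_assoc]
    · exact qmon_span_K ρ σ _ _ _ a1 a2 ⟨1, 0, by simp⟩ i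
    · exact qmon_span_K ρ σ (uK₁ ρ σ)⁻¹ _ _ (semiconj_inv ρ σ _ _ _ (by positivity) a1)
        (semiconj_inv ρ σ _ _ _ (by positivity) a2) ⟨-1, 0, by simp⟩ i
    · exact qmon_span_K ρ σ _ _ _ b1 b2 ⟨0, 1, by simp⟩ i
    · exact qmon_span_K ρ σ (uK₂ ρ σ)⁻¹ _ _ (semiconj_inv ρ σ _ _ _ (by positivity) b1)
        (semiconj_inv ρ σ _ _ _ (by positivity) b2) ⟨0, -1, by simp⟩ i
  have main : ∀ a : FreeAlgebra ℂ (Fin 6), ∀ w ∈ Submodule.span ℂ (Set.range (qmon ρ σ)),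
      RingQuot.mkAlgHom ℂ (VRel ρ σ) a * w ∈ Submodule.span ℂ (Set.range (qmon ρ σ)) := by
    intro a
    induction a using FreeAlgebra.induction with
    | grade0 c =>
      intro w hw
      rw [AlgHom.commutes, ← Algebra.smul_def]
      exact Submodule.smul_mem _ _ hw
    | grade1 j =>
      intro w hw
      induction hw using Submodule.span_induction with
      | mem x hx => obtain ⟨i, rfl⟩ := hx; exact gen j i
      | zero => simp
      | add x y _ _ hx hy => rw [mul_add]; exact Submodule.add_mem _ hx hy
      | smul c x _ hx => rw [mul_smul_comm]; exact Submodule.smul_mem _ _ hx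
    | mul a b ha hb => intro w hw; rw [map_mul, mul_assoc]; exact ha _ (hb _ hw)
    | add a b ha hb =>
      intro w hw; rw [map_add, add_mul]; exact Submodule.add_mem _ (ha _ hw) (hb _ hw)
  obtain ⟨a, rfl⟩ := RingQuot.mkAlgHom_surjective ℂ (VRel ρ σ) v
  have h1 : (1 : Vsl3 ρ σ) ∈ Submodule.span ℂ (Set.range (qmon ρ σ)) :=
    Submodule.subset_span ⟨(0, 0, 0, 0, 0), by simp [qmon, K₁z, K₂z]⟩
  simpa using main a 1 h1

end Span

/-! ### Injectivity and the unit group -/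

lemma qev_injective {ρ σ : ℂ} (hρ : ρ ≠ 0) (hσ : σ ≠ 0) (hrs : ρ ^ 3 - σ ^ 3 ≠ 0) :
    Function.Injective (qev hρ hσ) := by
  rw [injective_iff_map_eq_zero]
  intro v hv
  obtain ⟨l, rfl⟩ := (Finsupp.mem_span_range_iff_exists_finsupp).1 (qmon_span ρ σ hρ hσ v)
  rw [map_finsuppSum] at hv
  simp only [map_smul] at hv
  rw [qev_linearIndependent hρ hσ hrs l hv, Finsupp.sum_zero_index]

/-- The image of `V` involves only non-negative powers of `x₁, x₂, x₃`. -/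
lemma qev_nonneg {ρ σ : ℂ} (hρ : ρ ≠ 0) (hσ : σ ≠ 0) (hrs : ρ ^ 3 - σ ^ 3 ≠ 0)
    (v : Vsl3 ρ σ) (g : QG) (hg : qev hρ hσ v g ≠ 0) : 0 ≤ g.1 ∧ 0 ≤ g.2.1 ∧ 0 ≤ g.2.2.1 := by
  contrapose! hg
  have hv := qmon_span ρ σ hρ hσ v
  induction hv using Submodule.span_induction with
  | mem x hx =>
    obtain ⟨⟨a, b, c, m, n⟩, rfl⟩ := hx
    by_contra hne
    obtain ⟨i, hi, rfl⟩ := qev_qmon_support hρ hσ hrs a b c m n g hne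
    have := hg (by simp; omega) (by simp; omega)
    simp at this
    omega
  | zero => simp
  | add x y _ _ hx hy => simp [hx, hy]
  | smul c x _ hx => simp [hx]

/-- an element of `Ǔ^{≥0}_{r,s}(sl₃)` is a unit iff it is of the form
`λ K₁^m K₂^n` with `λ ∈ ℂ*`, `m, n ∈ ℤ`. -/
theorem stmt3 (ρ σ : ℂ) (hρ : ρ ≠ 0) (hσ : σ ≠ 0)
    (hind : ∀ m n : ℤ, (ρ ^ 3) ^ m * (σ ^ 3) ^ n = 1 → m = 0 ∧ n = 0)
    (u : Vsl3 ρ σ) :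
    IsUnit u ↔ ∃ (l : ℂ) (m n : ℤ), l ≠ 0 ∧ u = l • (K₁z ρ σ m * K₂z ρ σ n) := by
  constructor
  · intro hu
    obtain ⟨w, huw⟩ := hu.exists_right_inv
    -- independence of `r` and `s` enters only through `r ≠ s`
    have hrs : ρ ^ 3 - σ ^ 3 ≠ 0 := by
      intro h
      have h' : ρ ^ 3 = σ ^ 3 := sub_eq_zero.1 h
      have := hind 1 (-1) (by
        rw [h', zpow_one, zpow_neg_one]; exact mul_inv_cancel₀ (pow_ne_zero 3 hσ))
      exact one_ne_zero this.1
    obtain ⟨⟨a, b, c, m, n⟩, hv, hw⟩ := qev_unit hρ hσ u w huw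
    have hne : qev hρ hσ u (a, b, c, m, n) ≠ 0 := by
      rw [← Finsupp.mem_support_iff, hv]; simp
    have hne' : qev hρ hσ w (-(a, b, c, m, n)) ≠ 0 := by
      rw [← Finsupp.mem_support_iff, hw]; simp
    have h1 := qev_nonneg hρ hσ hrs u _ hne
    have h2 := qev_nonneg hρ hσ hrs w _ hne'
    simp only [Prod.neg_mk] at h1 h2
    obtain rfl : a = 0 := by omega
    obtain rfl : b = 0 := by omega
    obtain rfl : c = 0 := by omega
    refine ⟨_, m, n, hne, qev_injective hρ hσ hrs ?_⟩
    rw [map_smul, qev_K, Finsupp.smul_single, smul_eq_mul, mul_one]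
    exact (Finsupp.support_eq_singleton.1 hv).2
  · rintro ⟨l, m, n, hl, rfl⟩
    rw [K₁z_eq, K₂z_eq, ← Units.val_mul]
    rw [Algebra.smul_def]
    exact ((IsUnit.mk0 l hl).map (algebraMap ℂ (Vsl3 ρ σ))).mul (Units.isUnit _)
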